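/- arXiv:2105.07222 — 5 statements merged into one kernel-verified Lean document; each statement's English description precedes it below -/
import Mathlib

section
/- Let m ≥ 2 and let X_1, …, X_m be i.i.d. standard normal random variables. Then the random variable T_m = X_m / sqrt((1/m) ∑_{i=1}^m X_i²) has probability density function f_m(x) = (1/√m) · Γ(m/2) / (Γ((m-1)/2) Γ(1/2)) · (1 - x²/m)^{(m-1)/2 - 1} for |x| < √m, and f_m(x) = 0 for |x| ≥ √m. -/
open MeasureTheory ProbabilityTheory

lemma pi_gauss (n : ℕ) : Measure.pi (fun _ : Fin n => gaussianReal 0 1) =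
    (volume : Measure (Fin n → ℝ)).withDensity
      (fun x => ENNReal.ofReal (∏ i, gaussianPDFReal 0 1 (x i))) := by
  apply Measure.pi_eq
  intro s hs
  rw [withDensity_apply _ (MeasurableSet.univ_pi hs), volume_pi, Measure.restrict_pi_pi,
    ← ofReal_integral_eq_lintegral_ofReal]
  · rw [integral_fintype_prod_eq_prod (fun _ x => gaussianPDFReal 0 1 x), ENNReal.ofReal_prod_of_nonneg]
    · refine Finset.prod_congr rfl fun i _ => ?_
      rw [gaussianReal_apply_eq_integral _ one_ne_zero]
    · intro i _
      exact integral_nonneg fun x => gaussianPDFReal_nonneg _ _ _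
  · exact Integrable.fintype_prod (f := fun _ x => gaussianPDFReal 0 1 x)
      fun i => (integrable_gaussianPDFReal 0 1).restrict
  · exact Filter.Eventually.of_forall fun x => Finset.prod_nonneg fun i _ => gaussianPDFReal_nonneg _ _ _

lemma scale (m : ℝ) (r : ℝ) (hr : 0 < r) (g : ℝ → ENNReal) :
    ∫⁻ y, g (y / Real.sqrt ((1 / m) * (y ^ 2 + r ^ 2))) ∂(gaussianReal 0 1) =
    ∫⁻ t, g (t / Real.sqrt ((1 / m) * (t ^ 2 + 1))) *
      ENNReal.ofReal (r * gaussianPDFReal 0 1 (r * t)) := by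
  rw [gaussianReal_of_var_ne_zero _ one_ne_zero,
    lintegral_withDensity_eq_lintegral_mul_non_measurable _ (measurable_gaussianPDF 0 1)
      (Filter.Eventually.of_forall fun x => gaussianPDF_lt_top)]
  have h := lintegral_image_eq_lintegral_abs_deriv_mul (s := Set.univ) (f := fun t => r * t)
    (f' := fun _ => r) MeasurableSet.univ
    (fun x _ => by simpa using (hasDerivAt_id x).const_mul r)
    (fun a _ b _ hab => by simpa [hr.ne'] using hab)
    (gaussianPDF 0 1 * fun y => g (y / Real.sqrt ((1 / m) * (y ^ 2 + r ^ 2))))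
  have himg : (fun t => r * t) '' Set.univ = Set.univ := by
    rw [Set.image_univ]
    exact Set.range_eq_univ.2 fun y => ⟨y / r, mul_div_cancel₀ y hr.ne'⟩
  rw [himg] at h
  simp only [Measure.restrict_univ] at h
  rw [h]
  refine lintegral_congr fun t => ?_
  have : r * t / Real.sqrt ((1 / m) * ((r * t) ^ 2 + r ^ 2)) =
      t / Real.sqrt ((1 / m) * (t ^ 2 + 1)) := by
    rw [show (1 / m) * ((r * t) ^ 2 + r ^ 2) = r ^ 2 * ((1 / m) * (t ^ 2 + 1)) by ring,
      Real.sqrt_mul (by positivity), Real.sqrt_sq hr.le, mul_div_mul_left _ _ hr.ne']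
  simp only [Pi.mul_apply, this, abs_of_pos hr, gaussianPDF]
  rw [ENNReal.ofReal_mul hr.le]
  ring

lemma bracket (k : ℕ) (t : ℝ) :
    ∫⁻ x : Fin (k + 1) → ℝ, ENNReal.ofReal (Real.sqrt (∑ i, x i ^ 2) *
      gaussianPDFReal 0 1 (Real.sqrt (∑ i, x i ^ 2) * t))
      ∂(Measure.pi fun _ => gaussianReal 0 1) =
    ENNReal.ofReal ((Real.Gamma (((k : ℝ) + 2) / 2) /
      (Real.Gamma (((k : ℝ) + 1) / 2) * Real.Gamma (1 / 2))) *
        (1 + t ^ 2) ^ (-((k : ℝ) + 2) / 2)) := by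
  have hm1 : Measurable fun x : Fin (k + 1) → ℝ =>
      ENNReal.ofReal (∏ i, gaussianPDFReal 0 1 (x i)) := by
    refine ENNReal.measurable_ofReal.comp (Finset.measurable_prod _ fun i _ => ?_)
    exact (measurable_gaussianPDFReal 0 1).comp (measurable_pi_apply i)
  rw [pi_gauss, lintegral_withDensity_eq_lintegral_mul_non_measurable _ hm1
    (Filter.Eventually.of_forall fun x => ENNReal.ofReal_lt_top)]
  set b : ℝ := (1 + t ^ 2) / 2 with hb
  have hbpos : 0 < b := by positivity
  let f : ℝ → ℝ := fun r => (Real.sqrt (2 * Real.pi))⁻¹ ^ (k + 2) * (r * Real.exp (-b * r ^ 2))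
  have h1 : ∀ x : Fin (k + 1) → ℝ,
      ((fun x : Fin (k + 1) → ℝ => ENNReal.ofReal (∏ i, gaussianPDFReal 0 1 (x i))) *
        fun x : Fin (k + 1) → ℝ => ENNReal.ofReal (Real.sqrt (∑ i, x i ^ 2) *
      gaussianPDFReal 0 1 (Real.sqrt (∑ i, x i ^ 2) * t))) x =
      (fun y : EuclideanSpace ℝ (Fin (k + 1)) => ENNReal.ofReal (f ‖y‖)) (WithLp.toLp 2 x) := by
    intro x
    simp only [Pi.mul_apply, EuclideanSpace.norm_eq, Real.norm_eq_abs, sq_abs, f]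
    rw [← ENNReal.ofReal_mul (Finset.prod_nonneg fun i _ => gaussianPDFReal_nonneg _ _ _)]
    congr 1
    have h0 : 0 ≤ ∑ i, x i ^ 2 := Finset.sum_nonneg fun i _ => sq_nonneg _
    simp only [gaussianPDFReal, Finset.prod_mul_distrib, Finset.prod_const, ← Real.exp_sum,
      NNReal.coe_one, mul_one, sub_zero, Finset.card_univ, Fintype.card_fin]
    rw [mul_pow, Real.sq_sqrt h0, ← Finset.sum_div, Finset.sum_neg_distrib]
    set S := ∑ i, x i ^ 2
    rw [show -b * S = -S / 2 + -(S * t ^ 2) / 2 by rw [hb]; ring, Real.exp_add]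
    ring
  rw [lintegral_congr h1, (PiLp.volume_preserving_toLp (Fin (k + 1))).lintegral_comp_emb
    (MeasurableEquiv.toLp 2 (Fin (k + 1) → ℝ)).measurableEmbedding
    (fun y : EuclideanSpace ℝ (Fin (k + 1)) => ENNReal.ofReal (f ‖y‖))]
  have hr : Set.EqOn (fun y : ℝ => y ^ k • f y) (fun y => (Real.sqrt (2 * Real.pi))⁻¹ ^ (k + 2) *
      (y ^ ((k : ℝ) + 1) * Real.exp (-b * y ^ (2 : ℝ)))) (Set.Ioi 0) := by
    intro y hy
    simp only [f, smul_eq_mul]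
    rw [Real.rpow_add hy, Real.rpow_natCast, Real.rpow_one, Real.rpow_two]
    ring
  have hk : (-1 : ℝ) < (k : ℝ) + 1 := by
    have : (0 : ℝ) ≤ k := Nat.cast_nonneg k
    linarith
  rw [← ofReal_integral_eq_lintegral_ofReal, integral_fun_norm_addHaar]
  · rw [finrank_euclideanSpace, Fintype.card_fin, Nat.add_sub_cancel,
      setIntegral_congr_fun measurableSet_Ioi hr, integral_const_mul,
      integral_rpow_mul_exp_neg_mul_rpow two_pos hk hbpos, Measure.real,
      EuclideanSpace.volume_ball]
    congr 1
    have hG : Real.Gamma (((k + 1 : ℕ) : ℝ) / 2 + 1) =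
        ((k : ℝ) + 1) / 2 * Real.Gamma (((k : ℝ) + 1) / 2) := by
      rw [Real.Gamma_add_one (by positivity)]; push_cast; rfl
    have hGp : 0 < Real.Gamma (((k : ℝ) + 1) / 2) := Real.Gamma_pos_of_pos (by positivity)
    simp only [Fintype.card_fin, ENNReal.ofReal_one, one_pow, one_mul]
    rw [ENNReal.toReal_ofReal (by rw [hG]; positivity), hG, Real.Gamma_one_half_eq, hb,
      Real.div_rpow (by positivity) two_pos.le]
    have h2 : (2 : ℝ) ^ (-((k : ℝ) + 1 + 1) / 2) = (Real.sqrt 2)⁻¹ ^ (k + 2) := by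
      rw [Real.sqrt_eq_rpow, ← Real.rpow_neg two_pos.le, ← Real.rpow_mul_natCast two_pos.le]
      congr 1; push_cast; ring
    rw [h2, Real.sqrt_mul two_pos.le]
    have e1 : (k : ℝ) + 1 + 1 = k + 2 := by ring
    rw [e1]
    have p1 : (0:ℝ) < Real.sqrt 2 := by positivity
    have p2 : (0:ℝ) < Real.sqrt Real.pi := by positivity
    simp only [nsmul_eq_mul, smul_eq_mul, mul_inv, mul_pow, inv_pow]
    push_cast
    field_simp
    ring
  · rw [integrable_fun_norm_addHaar, finrank_euclideanSpace, Fintype.card_fin, Nat.add_sub_cancel,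
      integrableOn_congr_fun hr measurableSet_Ioi]
    exact (integrableOn_rpow_mul_exp_neg_mul_rpow hk two_pos hbpos).const_mul _
  · exact Filter.Eventually.of_forall fun x => by simp only [f, Pi.zero_apply]; positivity

lemma change_vars (m : ℕ) (hm : 2 ≤ m) (K : ℝ) (g : ℝ → ENNReal) :
    ∫⁻ t, g (t / Real.sqrt ((1 / (m : ℝ)) * (t ^ 2 + 1))) *
      ENNReal.ofReal (K * (1 + t ^ 2) ^ (-(m : ℝ) / 2)) =
    ∫⁻ u, ENNReal.ofReal (if |u| < Real.sqrt m then
          (1 / Real.sqrt m) * K * (1 - u ^ 2 / m) ^ (((m : ℝ) - 1) / 2 - 1) else 0) * g u := by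
  have hm0 : (0 : ℝ) < m := by positivity
  have hs : 0 < Real.sqrt m := Real.sqrt_pos.2 hm0
  set F : ℝ → ℝ := fun t => t / Real.sqrt ((1 / (m : ℝ)) * (t ^ 2 + 1)) with hF
  have hFe : ∀ t, F t = Real.sqrt m * (t / Real.sqrt (t ^ 2 + 1)) := by
    intro t
    simp only [hF]
    rw [Real.sqrt_mul (by positivity), Real.sqrt_div zero_le_one, Real.sqrt_one]
    field_simp
  have hFsq : ∀ t, F t ^ 2 / m = t ^ 2 / (t ^ 2 + 1) := by
    intro t
    rw [hFe, mul_pow, div_pow, Real.sq_sqrt hm0.le, Real.sq_sqrt (by positivity)]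
    field_simp
  have hd : ∀ t, HasDerivAt F (Real.sqrt m * (1 + t ^ 2) ^ (-(3 : ℝ) / 2)) t := by
    intro t
    have hp : 0 < t ^ 2 + 1 := by positivity
    have h1 : HasDerivAt (fun t : ℝ => t ^ 2 + 1) (2 * t) t := by
      simpa using (hasDerivAt_pow 2 t).add_const 1
    have h2 := ((hasDerivAt_id t).div (h1.sqrt hp.ne') (by positivity)).const_mul (Real.sqrt m)
    rw [show F = fun t => Real.sqrt m * (t / Real.sqrt (t ^ 2 + 1)) from funext hFe]
    refine h2.congr_deriv ?_
    have h3 : (1 + t ^ 2) ^ (-(3 : ℝ) / 2) = (Real.sqrt (t ^ 2 + 1))⁻¹ ^ 3 := by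
      rw [Real.sqrt_eq_rpow, ← Real.rpow_neg hp.le, ← Real.rpow_mul_natCast hp.le, add_comm]
      congr 1; push_cast; ring
    rw [h3]
    have hq : 0 < Real.sqrt (t ^ 2 + 1) := by positivity
    have hqq := Real.sq_sqrt hp.le
    simp only [id]
    field_simp
    rw [hqq]; ring
  have hinj : Function.Injective F := by
    have hmono : StrictMono F := strictMono_of_deriv_pos fun x => by
      rw [(hd x).deriv]; positivity
    exact hmono.injective
  have hlt : ∀ t, |F t| < Real.sqrt m := by
    intro t
    rw [← Real.sqrt_sq_eq_abs]
    apply Real.sqrt_lt_sqrt (sq_nonneg _)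
    have := hFsq t
    have h4 : t ^ 2 / (t ^ 2 + 1) < 1 := by rw [div_lt_one (by positivity)]; linarith
    rwa [← this, div_lt_one hm0] at h4
  have himg : F '' Set.univ = {u | |u| < Real.sqrt m} := by
    rw [Set.image_univ]
    ext u
    constructor
    · rintro ⟨t, rfl⟩; exact hlt t
    · intro hu
      have hu2 : 0 < m - u ^ 2 := by
        have := (Real.lt_sqrt (abs_nonneg u)).1 hu
        rw [sq_abs] at this; linarith
      have hq : 0 < Real.sqrt (m - u ^ 2) := by positivity
      refine ⟨u / Real.sqrt (m - u ^ 2), ?_⟩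
      rw [hFe, div_pow, Real.sq_sqrt hu2.le,
        show u ^ 2 / (m - u ^ 2) + 1 = m / (m - u ^ 2) by field_simp; ring,
        Real.sqrt_div hm0.le]
      field_simp
  have key := lintegral_image_eq_lintegral_abs_deriv_mul (s := Set.univ) (f := F) MeasurableSet.univ
    (fun x _ => (hd x).hasDerivWithinAt) hinj.injOn
    (fun u => ENNReal.ofReal (if |u| < Real.sqrt m then
          (1 / Real.sqrt m) * K * (1 - u ^ 2 / m) ^ (((m : ℝ) - 1) / 2 - 1) else 0) * g u)
  rw [himg, setLIntegral_eq_of_support_subset] at key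
  · rw [key, Measure.restrict_univ]
    refine lintegral_congr fun t => ?_
    rw [if_pos (hlt t), hFsq t, ← mul_assoc, ← ENNReal.ofReal_mul (abs_nonneg _),
      mul_comm (g _)]
    congr 2
    have hp : 0 < 1 + t ^ 2 := by positivity
    rw [abs_of_pos (by positivity), show 1 - t ^ 2 / (t ^ 2 + 1) = (1 + t ^ 2)⁻¹ by
      field_simp; ring, Real.inv_rpow hp.le, ← Real.rpow_neg hp.le,
      show -(m : ℝ) / 2 = -3 / 2 + -(((m : ℝ) - 1) / 2 - 1) by ring, Real.rpow_add hp]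
    field_simp
  · intro u hu
    by_contra h
    have h' : ¬ |u| < Real.sqrt m := h
    simp [h'] at hu

/-- If `X 0, …, X (m-1)` (representing `X_1, …, X_m`) are i.i.d. standard
normal random variables with `m ≥ 2`, then `T_m = X_m / √((1/m) ∑_{i=1}^m X_i²)` has density
`f_m(x) = (1/√m) · Γ(m/2) / (Γ((m-1)/2) Γ(1/2)) · (1 - x²/m)^((m-1)/2 - 1)` for `|x| < √m`
and `f_m(x) = 0` otherwise. -/
theorem adam_update_density
    {Ω : Type*} [MeasureSpace Ω] [IsProbabilityMeasure (ℙ : Measure Ω)]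
    (m : ℕ) (hm : 2 ≤ m)
    (X : Fin m → Ω → ℝ) (hmeas : ∀ i, Measurable (X i))
    (hindep : iIndepFun X ℙ)
    (hdist : ∀ i, Measure.map (X i) ℙ = gaussianReal 0 1) :
    Measure.map
        (fun ω => X ⟨m - 1, by omega⟩ ω /
          Real.sqrt ((1 / (m : ℝ)) * ∑ i : Fin m, X i ω ^ 2)) ℙ =
      volume.withDensity (fun x => ENNReal.ofReal
        (if |x| < Real.sqrt m then
          (1 / Real.sqrt m) *
            (Real.Gamma ((m : ℝ) / 2) /
              (Real.Gamma (((m : ℝ) - 1) / 2) * Real.Gamma (1 / 2))) *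
            (1 - x ^ 2 / m) ^ (((m : ℝ) - 1) / 2 - 1)
        else 0)) := by
  obtain ⟨k, rfl⟩ : ∃ k, m = k + 2 := ⟨m - 2, by omega⟩
  have hlast : (⟨k + 2 - 1, by omega⟩ : Fin (k + 2)) = Fin.last (k + 1) := rfl
  have hXm : Measurable fun ω i => X i ω := measurable_pi_lambda _ hmeas
  have hpi : Measure.map (fun ω i => X i ω) ℙ =
      Measure.pi (fun _ : Fin (k + 2) => gaussianReal 0 1) := by
    rw [(iIndepFun_iff_map_fun_eq_pi_map fun i => (hmeas i).aemeasurable).1 hindep]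
    simp only [hdist]
  have hT : Measurable fun x : Fin (k + 2) → ℝ => x (Fin.last (k + 1)) /
      Real.sqrt ((1 / ((k + 2 : ℕ) : ℝ)) * ∑ i, x i ^ 2) := by fun_prop
  have hdens : Measurable fun x : ℝ => ENNReal.ofReal
        (if |x| < Real.sqrt (k + 2 : ℕ) then
          (1 / Real.sqrt (k + 2 : ℕ)) *
            (Real.Gamma (((k + 2 : ℕ) : ℝ) / 2) /
              (Real.Gamma ((((k + 2 : ℕ) : ℝ) - 1) / 2) * Real.Gamma (1 / 2))) *
            (1 - x ^ 2 / (k + 2 : ℕ)) ^ ((((k + 2 : ℕ) : ℝ) - 1) / 2 - 1)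
        else 0) := by
    refine ENNReal.measurable_ofReal.comp (Measurable.ite ?_ ?_ measurable_const)
    · exact measurableSet_lt (by fun_prop) measurable_const
    · fun_prop
  refine Measure.ext_of_lintegral _ fun g hg => ?_
  rw [lintegral_withDensity_eq_lintegral_mul _ hdens hg]
  simp only [Pi.mul_apply]
  rw [← change_vars (k + 2) hm _ g]
  -- pass to the law of the vector
  have step1 : ∫⁻ a, g a ∂(Measure.map (fun ω => X ⟨k + 2 - 1, by omega⟩ ω /
          Real.sqrt ((1 / ((k + 2 : ℕ) : ℝ)) * ∑ i, X i ω ^ 2)) ℙ) =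
      ∫⁻ x, g (x (Fin.last (k + 1)) / Real.sqrt ((1 / ((k + 2 : ℕ) : ℝ)) * ∑ i, x i ^ 2))
        ∂(Measure.pi (fun _ : Fin (k + 2) => gaussianReal 0 1)) := by
    rw [← hpi]
    exact (lintegral_map hg (hT.comp hXm)).trans (lintegral_map (hg.comp hT) hXm).symm
  rw [step1]
  -- split off the last coordinate
  have mp := measurePreserving_piFinSuccAbove (fun _ : Fin (k + 2) => gaussianReal 0 1)
    (Fin.last (k + 1))
  have step2 : ∫⁻ x, g (x (Fin.last (k + 1)) / Real.sqrt ((1 / ((k + 2 : ℕ) : ℝ)) * ∑ i, x i ^ 2))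
        ∂(Measure.pi (fun _ : Fin (k + 2) => gaussianReal 0 1)) =
      ∫⁻ p : ℝ × (Fin (k + 1) → ℝ),
        g (p.1 / Real.sqrt ((1 / ((k + 2 : ℕ) : ℝ)) * (p.1 ^ 2 + Real.sqrt (∑ i, p.2 i ^ 2) ^ 2)))
        ∂((gaussianReal 0 1).prod (Measure.pi fun _ => gaussianReal 0 1)) := by
    rw [← mp.lintegral_comp_emb (MeasurableEquiv.measurableEmbedding _)]
    refine lintegral_congr fun x => ?_
    have h0 : 0 ≤ ∑ i, x ((Fin.last (k + 1)).succAbove i) ^ 2 :=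
      Finset.sum_nonneg fun i _ => sq_nonneg _
    change _ = g (x (Fin.last (k + 1)) / Real.sqrt ((1 / ((k + 2 : ℕ) : ℝ)) *
      (x (Fin.last (k + 1)) ^ 2 +
        Real.sqrt (∑ i, x ((Fin.last (k + 1)).succAbove i) ^ 2) ^ 2)))
    rw [Real.sq_sqrt h0, Fin.sum_univ_succAbove _ (Fin.last (k + 1))]
  rw [step2, lintegral_prod_symm _ (by fun_prop)]
  -- scaling
  have hae : ∀ᵐ x ∂(Measure.pi fun _ : Fin (k + 1) => gaussianReal 0 1), x ≠ 0 := by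
    rw [pi_gauss]
    exact (withDensity_absolutelyContinuous _ _).ae_le (Measure.ae_ne volume 0)
  have step3 := lintegral_congr_ae (hae.mono fun x hx =>
    scale ((k + 2 : ℕ) : ℝ) (Real.sqrt (∑ i, x i ^ 2)) (Real.sqrt_pos.2 (by
      obtain ⟨i, hi⟩ := Function.ne_iff.1 hx
      exact Finset.sum_pos' (fun i _ => sq_nonneg _) ⟨i, Finset.mem_univ _, by
        have : x i ≠ 0 := hi
        positivity⟩)) g)
  rw [step3]
  have hgp := measurable_gaussianPDFReal 0 1
  rw [lintegral_lintegral_swap]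
  · refine lintegral_congr fun t => ?_
    rw [lintegral_const_mul _ (by fun_prop), bracket]
    congr 3
    · push_cast; ring_nf
    · push_cast; ring_nf
  · fun_prop
end

section
/- Let m ≥ 2 and let X_1, …, X_m be i.i.d. standard normal random variables. Define T_m = X_m / sqrt((1/m) ∑_{i=1}^m X_i²). Then E[T_m] = 0 and Var[T_m] = E[T_m²] = 1. In particular, the variance of the Adam update under these assumptions is constant in the time step m and does not diverge. -/
open MeasureTheory ProbabilityTheory

/-- If `X 0, …, X (m-1)` (representing `X_1, …, X_m`) are i.i.d. standard
normal random variables with `m ≥ 2` and `T_m = X_m / √((1/m) ∑_{i=1}^m X_i²)`, then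
`E[T_m] = 0` and `Var[T_m] = E[T_m²] = 1`: the variance of the Adam update is constant in
the time step `m` and does not diverge. -/
theorem adam_update_mean_zero_variance_one
    {Ω : Type*} [MeasureSpace Ω] [IsProbabilityMeasure (ℙ : Measure Ω)]
    (m : ℕ) (hm : 2 ≤ m)
    (X : Fin m → Ω → ℝ) (hmeas : ∀ i, Measurable (X i))
    (hindep : iIndepFun X ℙ)
    (hdist : ∀ i, Measure.map (X i) ℙ = gaussianReal 0 1)
    (T : Ω → ℝ)
    (hT : ∀ ω, T ω =
      X ⟨m - 1, by omega⟩ ω / Real.sqrt ((1 / (m : ℝ)) * ∑ i : Fin m, X i ω ^ 2)) :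
    (∫ ω, T ω ∂ℙ = 0) ∧ (∫ ω, T ω ^ 2 ∂ℙ = 1) ∧ variance T ℙ = 1 := by
  have key : ∀ Y : Fin m → Ω → ℝ, (∀ i, Measurable (Y i)) → iIndepFun Y ℙ →
      (∀ i, Measure.map (Y i) ℙ = gaussianReal 0 1) →
      ∀ f : (Fin m → ℝ) → ℝ, Measurable f →
      ∫ ω, f (fun i => Y i ω) ∂ℙ = ∫ x, f x ∂(Measure.pi fun _ : Fin m => gaussianReal 0 1) := by
    intro Y hY hi hd f hf
    have h := (iIndepFun_iff_map_fun_eq_pi_map (fun i => (hY i).aemeasurable)).1 hi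
    simp only [hd] at h
    rw [← h, integral_map (measurable_pi_lambda _ hY).aemeasurable hf.aestronglyMeasurable]
  have hm0 : (0 : ℝ) < m := by exact_mod_cast (by omega : 0 < m)
  generalize hk : (⟨m - 1, by omega⟩ : Fin m) = k at hT
  have hTm : Measurable T := by
    rw [funext hT]
    fun_prop
  have hS : ∀ ω, 0 ≤ ∑ i, X i ω ^ 2 := fun ω => Finset.sum_nonneg fun i _ => sq_nonneg _
  -- mean zero by the symmetry `X ↦ -X`
  have hmean : ∫ ω, T ω ∂ℙ = 0 := by
    let f : (Fin m → ℝ) → ℝ := fun x => x k / Real.sqrt ((1 / (m : ℝ)) * ∑ i, x i ^ 2)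
    have hf : Measurable f := by fun_prop
    have h1 := key X hmeas hindep hdist f hf
    have h2 := key (fun i ω => - X i ω) (fun i => (hmeas i).neg)
      (hindep.comp (fun _ x => -x) (fun _ => measurable_neg)) (fun i => by
        have : (fun ω => - X i ω) = (fun x : ℝ => -x) ∘ X i := rfl
        rw [this, ← Measure.map_map measurable_neg (hmeas i), hdist, gaussianReal_map_neg]
        simp) f hf
    rw [← h1] at h2
    have h3 : ∀ ω, f (fun i => - X i ω) = - T ω := fun ω => by simp [f, hT, neg_div]
    have h4 : ∀ ω, f (fun i => X i ω) = T ω := fun ω => by simp [f, hT]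
    simp only [h3, h4, integral_neg] at h2
    linarith
  let g : Fin m → (Fin m → ℝ) → ℝ := fun j x => x j ^ 2 / ((1 / (m : ℝ)) * ∑ i, x i ^ 2)
  have hg : ∀ j, Measurable (g j) := fun j => by fun_prop
  have hTg : ∀ ω, T ω ^ 2 = g k (fun i => X i ω) := fun ω => by
    simp only [g, hT, div_pow]
    rw [Real.sq_sqrt (mul_nonneg (by positivity) (hS ω))]
  have hswap : ∀ j, ∫ ω, g j (fun i => X i ω) ∂ℙ = ∫ ω, g k (fun i => X i ω) ∂ℙ := by
    intro j
    have h1 := key X hmeas hindep hdist (g k) (hg k)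
    have h2 := key (fun i => X (Equiv.swap k j i)) (fun i => hmeas _)
      (hindep.precomp (Equiv.swap k j).injective) (fun i => hdist _) (g k) (hg k)
    rw [h1, ← h2]
    congr 1
    ext ω
    simp only [g, Equiv.swap_apply_left]
    rw [Equiv.sum_comp (Equiv.swap k j) (fun i => X i ω ^ 2)]
  have hint : ∀ j, Integrable (fun ω => g j (fun i => X i ω)) ℙ := by
    intro j
    refine Integrable.of_bound (C := m)
      ((hg j).comp (measurable_pi_lambda _ hmeas)).aestronglyMeasurable (ae_of_all _ fun ω => ?_)
    have hle : X j ω ^ 2 ≤ ∑ i, X i ω ^ 2 :=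
      Finset.single_le_sum (f := fun i => X i ω ^ 2) (fun i _ => sq_nonneg _) (Finset.mem_univ j)
    have hnn : 0 ≤ (1 / (m : ℝ)) * ∑ i, X i ω ^ 2 := mul_nonneg (by positivity) (hS ω)
    rw [Real.norm_of_nonneg (div_nonneg (sq_nonneg _) hnn)]
    refine div_le_of_le_mul₀ hnn hm0.le ?_
    rw [← mul_assoc, mul_one_div_cancel hm0.ne', one_mul]
    exact hle
  have hne : ∀ᵐ ω ∂(ℙ : Measure Ω), X k ω ≠ 0 := by
    have : ∀ᵐ x ∂(Measure.map (X k) ℙ), x ≠ 0 := by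
      rw [hdist]
      haveI := noAtoms_gaussianReal (μ := 0) (v := 1) one_ne_zero
      simp [ae_iff]
    exact ae_of_ae_map (hmeas k).aemeasurable this
  have hsum : ∫ ω, ∑ j, g j (fun i => X i ω) ∂ℙ = m := by
    have : (fun ω => ∑ j, g j (fun i => X i ω)) =ᵐ[ℙ] fun _ => (m : ℝ) := by
      filter_upwards [hne] with ω hω
      have hpos : 0 < ∑ i, X i ω ^ 2 :=
        lt_of_lt_of_le (by positivity : 0 < X k ω ^ 2)
          (Finset.single_le_sum (f := fun i => X i ω ^ 2) (fun i _ => sq_nonneg _)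
            (Finset.mem_univ k))
      simp only [g, ← Finset.sum_div]
      field_simp
    rw [integral_congr_ae this]
    simp
  have hsq : ∫ ω, T ω ^ 2 ∂ℙ = 1 := by
    simp only [hTg]
    rw [integral_finset_sum _ (fun j _ => hint j)] at hsum
    simp only [hswap, Finset.sum_const, Finset.card_univ, Fintype.card_fin, nsmul_eq_mul] at hsum
    exact mul_left_cancel₀ hm0.ne' (by rw [hsum, mul_one])
  refine ⟨hmean, hsq, ?_⟩
  rw [variance_of_integral_eq_zero hTm.aemeasurable hmean]
  exact hsq
end

section
/- Let m ≥ 2 and let X_1, …, X_m be i.i.d. standard normal random variables. Define T_m = X_m / sqrt((1/m) ∑_{i=1}^m X_i²). Then E[|T_m|] = 2 √m Γ(m/2) / (√π (m-1) Γ((m-1)/2)), and consequently Var[|T_m|] = 1 - 4 m Γ(m/2)² / ((m-1)² π Γ((m-1)/2)²). -/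
open MeasureTheory ProbabilityTheory

lemma aux_ofReal {α : Type*} [MeasurableSpace α] {μ : Measure α} {f : α → ℝ} {c : ℝ}
    (h0 : 0 ≤ᵐ[μ] f) (h : ∫ x, f x ∂μ = c) (hc : c ≠ 0) :
    ∫⁻ x, ENNReal.ofReal (f x) ∂μ = ENNReal.ofReal c := by
  have hi : Integrable f μ := by
    by_contra hn
    exact hc (h ▸ integral_undef hn)
  rw [← ofReal_integral_eq_lintegral_ofReal hi h0, h]

lemma aux_gamma {a r : ℝ} (ha : 0 < a) (hr : 0 < r) :
    ∫⁻ t in Set.Ioi (0 : ℝ), ENNReal.ofReal (t ^ (a - 1) * Real.exp (-(r * t)))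
      = ENNReal.ofReal ((1 / r) ^ a * Real.Gamma a) := by
  refine aux_ofReal ?_ (Real.integral_rpow_mul_exp_neg_mul_Ioi ha hr) ?_
  · filter_upwards [ae_restrict_mem measurableSet_Ioi] with t ht
    have : (0 : ℝ) < t := ht
    simp only [Pi.zero_apply]
    positivity
  · have := Real.Gamma_pos_of_pos ha
    positivity

lemma aux_gauss {q t : ℝ} (hq : 0 ≤ q) (ht : 0 < t) :
    ∫⁻ x, ENNReal.ofReal (|x| ^ q * Real.exp (-(t * x ^ 2))) ∂(gaussianReal 0 1)
      = ENNReal.ofReal ((Real.sqrt (2 * Real.pi))⁻¹ *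
        ((1 / (t + 1 / 2)) ^ ((q + 1) / 2) * Real.Gamma ((q + 1) / 2))) := by
  have hG := Real.Gamma_pos_of_pos (show 0 < (q + 1) / 2 by linarith)
  refine aux_ofReal (Filter.Eventually.of_forall fun x => by simp only [Pi.zero_apply]; positivity)
    ?_ (by positivity)
  rw [integral_gaussianReal_eq_integral_smul one_ne_zero]
  have h1 : ∀ x : ℝ, gaussianPDFReal 0 1 x • (|x| ^ q * Real.exp (-(t * x ^ 2))) =
      (Real.sqrt (2 * Real.pi))⁻¹ * (|x| ^ q * Real.exp (-(t + 1 / 2) * |x| ^ (2 : ℝ))) := by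
    intro x
    rw [gaussianPDFReal_def]
    have : Real.exp (-(t + 1 / 2) * |x| ^ (2 : ℝ))
        = Real.exp (-(x - 0) ^ 2 / (2 * 1)) * Real.exp (-(t * x ^ 2)) := by
      rw [← Real.exp_add, Real.rpow_two, sq_abs]; congr 1; ring
    rw [this]
    simp only [NNReal.coe_one, mul_one, smul_eq_mul]
    ring
  simp_rw [h1]
  rw [integral_const_mul, integral_comp_abs (f := fun x : ℝ => x ^ q * Real.exp (-(t + 1 / 2) * x ^ (2 : ℝ))),
    integral_rpow_mul_exp_neg_mul_rpow (by norm_num) (by linarith) (by linarith)]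
  rw [one_div (t + 1 / 2), Real.inv_rpow (by linarith), ← Real.rpow_neg (by linarith)]
  rw [neg_div]; ring

/-- Beta prime integral. -/
lemma aux_beta {a b c : ℝ} (ha : 0 < a) (hb : 0 < b) (hc : 0 < c) :
    ∫⁻ t in Set.Ioi (0 : ℝ), ENNReal.ofReal (t ^ (a - 1) * (1 / (t + c)) ^ (a + b))
      = ENNReal.ofReal ((1 / c) ^ b * Real.Gamma a * Real.Gamma b / Real.Gamma (a + b)) := by
  have hGa := Real.Gamma_pos_of_pos ha
  have hGb := Real.Gamma_pos_of_pos hb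
  have hGab := Real.Gamma_pos_of_pos (add_pos ha hb)
  have h1 : ∀ t ∈ Set.Ioi (0 : ℝ), ENNReal.ofReal (t ^ (a - 1) * (1 / (t + c)) ^ (a + b)) =
      ∫⁻ u in Set.Ioi (0 : ℝ), ENNReal.ofReal ((Real.Gamma (a + b))⁻¹ * t ^ (a - 1) *
        (u ^ (a + b - 1) * Real.exp (-((t + c) * u)))) := by
    intro t ht
    have ht : (0 : ℝ) < t := ht
    have : 0 ≤ (Real.Gamma (a + b))⁻¹ * t ^ (a - 1) := by positivity
    simp_rw [ENNReal.ofReal_mul this]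
    rw [lintegral_const_mul _ (by fun_prop), aux_gamma (by linarith) (by linarith),
      ← ENNReal.ofReal_mul this]
    congr 1
    field_simp
  rw [setLIntegral_congr_fun measurableSet_Ioi h1, lintegral_lintegral_swap (by fun_prop)]
  have h2 : ∀ u ∈ Set.Ioi (0 : ℝ), (∫⁻ t in Set.Ioi (0 : ℝ),
      ENNReal.ofReal ((Real.Gamma (a + b))⁻¹ * t ^ (a - 1) *
        (u ^ (a + b - 1) * Real.exp (-((t + c) * u))))) =
      ENNReal.ofReal ((Real.Gamma (a + b))⁻¹ * Real.Gamma a) *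
        ENNReal.ofReal (u ^ (b - 1) * Real.exp (-(c * u))) := by
    intro u hu
    have hu : (0 : ℝ) < u := hu
    have h0 : 0 ≤ (Real.Gamma (a + b))⁻¹ * u ^ (a + b - 1) * Real.exp (-(c * u)) := by positivity
    have : ∀ t : ℝ, (Real.Gamma (a + b))⁻¹ * t ^ (a - 1) *
        (u ^ (a + b - 1) * Real.exp (-((t + c) * u))) =
        (Real.Gamma (a + b))⁻¹ * u ^ (a + b - 1) * Real.exp (-(c * u)) *
          (t ^ (a - 1) * Real.exp (-(u * t))) := by
      intro t
      have : Real.exp (-((t + c) * u)) = Real.exp (-(c * u)) * Real.exp (-(u * t)) := by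
        rw [← Real.exp_add]; congr 1; ring
      rw [this]; ring
    simp_rw [this, ENNReal.ofReal_mul h0]
    rw [lintegral_const_mul _ (by fun_prop), aux_gamma ha hu, ← ENNReal.ofReal_mul h0,
      ← ENNReal.ofReal_mul (by positivity)]
    congr 1
    have h3 : u ^ (a + b - 1) = u ^ a * u ^ (b - 1) := by
      rw [← Real.rpow_add hu]; congr 1; ring
    have := Real.rpow_pos_of_pos hu a
    rw [h3, Real.div_rpow (by norm_num) hu.le, Real.one_rpow]
    field_simp
  rw [setLIntegral_congr_fun measurableSet_Ioi h2, lintegral_const_mul _ (by fun_prop),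
    aux_gamma hb hc, ← ENNReal.ofReal_mul (by positivity)]
  congr 1
  field_simp

lemma aux_main {Ω : Type*} [MeasurableSpace Ω] {P : Measure Ω}
    (m : ℕ) (j : Fin m)
    (X : Fin m → Ω → ℝ) (hmeas : ∀ i, Measurable (X i))
    (hindep : iIndepFun X P)
    (hdist : ∀ i, Measure.map (X i) P = gaussianReal 0 1) {p : ℝ} (hp : 0 < p) :
    ∫⁻ ω, ENNReal.ofReal (|X j ω| ^ p * (1 / ∑ i, X i ω ^ 2) ^ (p / 2)) ∂P =
      ENNReal.ofReal (Real.Gamma ((p + 1) / 2) / Real.sqrt Real.pi *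
        Real.Gamma (m / 2) / Real.Gamma ((m + p) / 2)) := by
  have hm : 0 < m := j.pos
  have hm' : (0 : ℝ) < m := by exact_mod_cast hm
  have := hindep.isProbabilityMeasure
  have hG := Real.Gamma_pos_of_pos (show 0 < p / 2 by linarith)
  have hG1 := Real.Gamma_pos_of_pos (show 0 < (p + 1) / 2 by linarith)
  have h1 : ∀ ω, ENNReal.ofReal (|X j ω| ^ p * (1 / ∑ i, X i ω ^ 2) ^ (p / 2)) =
      ∫⁻ t in Set.Ioi (0 : ℝ), ENNReal.ofReal ((Real.Gamma (p / 2))⁻¹ * |X j ω| ^ p *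
        (t ^ (p / 2 - 1) * Real.exp (-((∑ i, X i ω ^ 2) * t)))) := by
    intro ω
    by_cases h0 : X j ω = 0
    · simp [h0, Real.zero_rpow hp.ne']
    have hS : 0 < ∑ i, X i ω ^ 2 :=
      Finset.sum_pos' (fun i _ => sq_nonneg _) ⟨j, Finset.mem_univ _, by positivity⟩
    have h0 : 0 ≤ (Real.Gamma (p / 2))⁻¹ * |X j ω| ^ p := by positivity
    simp_rw [ENNReal.ofReal_mul h0]
    rw [lintegral_const_mul _ (by fun_prop), aux_gamma (by linarith) hS, ← ENNReal.ofReal_mul h0]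
    congr 1
    field_simp
  simp_rw [h1]
  rw [lintegral_lintegral_swap (by fun_prop)]
  have h2 : ∀ t ∈ Set.Ioi (0 : ℝ), (∫⁻ ω, ENNReal.ofReal ((Real.Gamma (p / 2))⁻¹ * |X j ω| ^ p *
        (t ^ (p / 2 - 1) * Real.exp (-((∑ i, X i ω ^ 2) * t)))) ∂P) =
      ENNReal.ofReal ((Real.Gamma (p / 2))⁻¹ * (Real.Gamma ((p + 1) / 2) / Real.sqrt Real.pi) *
        (1 / 2) ^ ((m : ℝ) / 2)) *
      ENNReal.ofReal (t ^ (p / 2 - 1) * (1 / (t + 1 / 2)) ^ (p / 2 + m / 2)) := by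
    intro t ht
    have ht : (0 : ℝ) < t := ht
    let q : Fin m → ℝ := fun i => if i = j then p else 0
    have hq : ∀ i, 0 ≤ q i := fun i => by dsimp [q]; split_ifs <;> linarith
    let f : Fin m → ℝ → ENNReal :=
      fun i x => ENNReal.ofReal (|x| ^ q i * Real.exp (-(t * x ^ 2)))
    have hf : ∀ i, Measurable (f i) := fun i => by dsimp [f]; fun_prop
    have hind := hindep.comp f hf
    have hprod := lintegral_prod_eq_prod_lintegral_of_indepFun Finset.univ _ hind
      (fun i => (hf i).comp (hmeas i))
    have hE : ∀ i, ∫⁻ ω, (f i ∘ X i) ω ∂P = ENNReal.ofReal ((Real.sqrt (2 * Real.pi))⁻¹ *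
        ((1 / (t + 1 / 2)) ^ ((q i + 1) / 2) * Real.Gamma ((q i + 1) / 2))) := by
      intro i
      rw [← aux_gauss (hq i) ht, ← hdist i, lintegral_map (hf i) (hmeas i)]
      rfl
    have hcst : 0 ≤ (Real.Gamma (p / 2))⁻¹ * t ^ (p / 2 - 1) := by positivity
    have hpt : ∀ ω, ENNReal.ofReal ((Real.Gamma (p / 2))⁻¹ * |X j ω| ^ p *
        (t ^ (p / 2 - 1) * Real.exp (-((∑ i, X i ω ^ 2) * t)))) =
        ENNReal.ofReal ((Real.Gamma (p / 2))⁻¹ * t ^ (p / 2 - 1)) * ∏ i, (f i ∘ X i) ω := by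
      intro ω
      simp only [f, Function.comp]
      rw [← ENNReal.ofReal_prod_of_nonneg (fun i _ => by positivity), ← ENNReal.ofReal_mul hcst,
        Finset.prod_mul_distrib, ← Real.exp_sum]
      have e1 : ∏ i, |X i ω| ^ q i = |X j ω| ^ p := by
        rw [Finset.prod_eq_single j] <;> simp +contextual [q]
      rw [e1, Finset.sum_neg_distrib, ← Finset.mul_sum, mul_comm t]
      congr 1; ring
    simp_rw [hpt]
    rw [lintegral_const_mul _ (Finset.measurable_fun_prod _ fun i _ => (hf i).comp (hmeas i)), hprod]
    simp_rw [hE]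
    have hGq : ∀ i, 0 < Real.Gamma ((q i + 1) / 2) := fun i =>
      Real.Gamma_pos_of_pos (by linarith [hq i])
    rw [← ENNReal.ofReal_prod_of_nonneg (fun i _ => by have := hGq i; positivity),
      ← ENNReal.ofReal_mul hcst, ← ENNReal.ofReal_mul (by positivity)]
    congr 1
    have e2 : ∏ i, Real.Gamma ((q i + 1) / 2) =
        Real.Gamma ((p + 1) / 2) / Real.sqrt Real.pi * Real.sqrt Real.pi ^ m := by
      have : ∀ i, Real.Gamma ((q i + 1) / 2) =
          (if i = j then Real.Gamma ((p + 1) / 2) / Real.sqrt Real.pi else 1) * Real.sqrt Real.pi := by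
        intro i
        by_cases h : i = j
        · have := Real.sqrt_pos.mpr Real.pi_pos
          simp only [q, h, if_true]
          field_simp
        · simp [q, h, ← Real.Gamma_one_half_eq]
      simp_rw [this]
      rw [Finset.prod_mul_distrib, Finset.prod_ite_eq' Finset.univ j]
      simp
    have e3 : ∏ i, (1 / (t + 1 / 2)) ^ ((q i + 1) / 2) = (1 / (t + 1 / 2)) ^ (p / 2 + m / 2) := by
      rw [← Real.rpow_sum_of_pos (by positivity)]
      congr 1
      rw [← Finset.sum_div, Finset.sum_add_distrib]
      simp [q, add_div]
    have e4 : ((Real.sqrt (2 * Real.pi))⁻¹) ^ m * Real.sqrt Real.pi ^ m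
        = (1 / 2) ^ ((m : ℝ) / 2) := by
      rw [← mul_pow, Real.sqrt_mul (by norm_num)]
      have : (Real.sqrt 2 * Real.sqrt Real.pi)⁻¹ * Real.sqrt Real.pi = Real.sqrt (1 / 2) := by
        rw [Real.sqrt_div (by norm_num), Real.sqrt_one]; field_simp
      rw [this, Real.sqrt_eq_rpow, ← Real.rpow_natCast, ← Real.rpow_mul (by norm_num)]
      congr 1; ring
    rw [Finset.prod_mul_distrib, Finset.prod_mul_distrib, e2, e3, ← e4]
    simp only [Finset.prod_const, Finset.card_univ, Fintype.card_fin]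
    ring
  rw [setLIntegral_congr_fun measurableSet_Ioi h2, lintegral_const_mul _ (by fun_prop),
    aux_beta (by linarith) (by linarith) (by norm_num), ← ENNReal.ofReal_mul (by positivity)]
  congr 1
  have e5 : (1 / 2 : ℝ) ^ ((m : ℝ) / 2) * (1 / (1 / 2)) ^ ((m : ℝ) / 2) = 1 := by
    rw [← Real.mul_rpow (by norm_num) (by norm_num)]; norm_num
  rw [show ((m : ℝ) + p) / 2 = p / 2 + m / 2 by ring]
  have hG2 := Real.Gamma_pos_of_pos (show 0 < p / 2 + m / 2 by linarith)
  calc _ = ((1 / 2 : ℝ) ^ ((m : ℝ) / 2) * (1 / (1 / 2)) ^ ((m : ℝ) / 2)) *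
      ((Real.Gamma (p / 2))⁻¹ * Real.Gamma (p / 2)) *
      (Real.Gamma ((p + 1) / 2) / Real.sqrt Real.pi *
        Real.Gamma (m / 2) / Real.Gamma (p / 2 + m / 2)) := by ring
    _ = _ := by rw [e5, inv_mul_cancel₀ hG.ne']; ring

/-- If `X 0, …, X (m-1)` (representing `X_1, …, X_m`) are i.i.d. standard
normal random variables with `m ≥ 2` and `T_m = X_m / √((1/m) ∑_{i=1}^m X_i²)`, then
`E[|T_m|] = 2 √m Γ(m/2) / (√π (m-1) Γ((m-1)/2))` and consequently
`Var[|T_m|] = 1 - 4 m Γ(m/2)² / ((m-1)² π Γ((m-1)/2)²)`. -/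
theorem adam_update_abs_mean_and_variance
    {Ω : Type*} [MeasureSpace Ω] [IsProbabilityMeasure (ℙ : Measure Ω)]
    (m : ℕ) (hm : 2 ≤ m)
    (X : Fin m → Ω → ℝ) (hmeas : ∀ i, Measurable (X i))
    (hindep : iIndepFun X ℙ)
    (hdist : ∀ i, Measure.map (X i) ℙ = gaussianReal 0 1)
    (T : Ω → ℝ)
    (hT : ∀ ω, T ω =
      X ⟨m - 1, by omega⟩ ω / Real.sqrt ((1 / (m : ℝ)) * ∑ i : Fin m, X i ω ^ 2)) :
    (∫ ω, |T ω| ∂ℙ =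
        2 * Real.sqrt m * Real.Gamma ((m : ℝ) / 2) /
          (Real.sqrt Real.pi * ((m : ℝ) - 1) * Real.Gamma (((m : ℝ) - 1) / 2))) ∧
      variance (fun ω => |T ω|) ℙ =
        1 - 4 * m * Real.Gamma ((m : ℝ) / 2) ^ 2 /
          (((m : ℝ) - 1) ^ 2 * Real.pi * Real.Gamma (((m : ℝ) - 1) / 2) ^ 2) := by
  have hm' : (2 : ℝ) ≤ m := by exact_mod_cast hm
  have hm0 : (0 : ℝ) < m := by linarith
  have hTm : Measurable T := by
    rw [funext hT]; fun_prop
  have hG0 := Real.Gamma_pos_of_pos (show 0 < (m : ℝ) / 2 by linarith)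
  have hG1 := Real.Gamma_pos_of_pos (show 0 < ((m : ℝ) - 1) / 2 by linarith)
  have hS : ∀ ω, 0 ≤ ∑ i : Fin m, X i ω ^ 2 := fun ω => Finset.sum_nonneg fun i _ => sq_nonneg _
  have habs : ∀ ω, |T ω| = Real.sqrt m * (|X ⟨m - 1, by omega⟩ ω| ^ (1 : ℝ) *
      (1 / ∑ i, X i ω ^ 2) ^ ((1 : ℝ) / 2)) := by
    intro ω
    rw [hT, abs_div, abs_of_nonneg (Real.sqrt_nonneg _), ← Real.sqrt_eq_rpow, Real.rpow_one,
      Real.sqrt_mul (by positivity), Real.sqrt_div (by norm_num), Real.sqrt_div (by norm_num),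
      Real.sqrt_one, div_mul_eq_div_div_swap, div_div_eq_mul_div]
    ring
  have hsq : ∀ ω, T ω ^ 2 = m * (|X ⟨m - 1, by omega⟩ ω| ^ (2 : ℝ) *
      (1 / ∑ i, X i ω ^ 2) ^ ((2 : ℝ) / 2)) := by
    intro ω
    rw [hT, div_pow, Real.sq_sqrt (mul_nonneg (by positivity) (hS ω)), Real.rpow_two, sq_abs,
      div_self two_ne_zero, Real.rpow_one, div_mul_eq_div_div_swap, div_div_eq_mul_div]
    ring
  have hmain1 := aux_main m ⟨m - 1, by omega⟩ X hmeas hindep hdist (p := 1) one_pos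
  have hmain2 := aux_main m ⟨m - 1, by omega⟩ X hmeas hindep hdist (p := 2) two_pos
  have hG2 : Real.Gamma (((m : ℝ) + 1) / 2) = ((m : ℝ) - 1) / 2 * Real.Gamma (((m : ℝ) - 1) / 2) := by
    rw [← Real.Gamma_add_one (by linarith)]; congr 1; ring
  have hmean : ∫ ω, |T ω| ∂ℙ =
        2 * Real.sqrt m * Real.Gamma ((m : ℝ) / 2) /
          (Real.sqrt Real.pi * ((m : ℝ) - 1) * Real.Gamma (((m : ℝ) - 1) / 2)) := by
    rw [integral_eq_lintegral_of_nonneg_ae (Filter.Eventually.of_forall fun ω => abs_nonneg _)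
      hTm.abs.aestronglyMeasurable]
    simp_rw [habs, ENNReal.ofReal_mul (Real.sqrt_nonneg _)]
    rw [lintegral_const_mul _ (by fun_prop), hmain1, hG2]
    have : (0 : ℝ) < m - 1 := by linarith
    norm_num
    rw [ENNReal.toReal_ofReal (by positivity)]
    field_simp
  have hsqI : ∫⁻ ω, ENNReal.ofReal (T ω ^ 2) ∂ℙ = 1 := by
    simp_rw [hsq, ENNReal.ofReal_mul hm0.le]
    rw [lintegral_const_mul _ (by fun_prop), hmain2, ← ENNReal.ofReal_mul hm0.le]
    rw [show ((m : ℝ) + 2) / 2 = m / 2 + 1 by ring, show ((2 : ℝ) + 1) / 2 = 1 / 2 + 1 by norm_num,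
      Real.Gamma_add_one (by positivity), Real.Gamma_add_one (by positivity), Real.Gamma_one_half_eq,
      ← ENNReal.ofReal_one]
    congr 1
    field_simp
  have hsqInt : ∫ ω, T ω ^ 2 ∂ℙ = 1 := by
    rw [integral_eq_lintegral_of_nonneg_ae (Filter.Eventually.of_forall fun ω => sq_nonneg _)
      (hTm.pow_const 2).aestronglyMeasurable, hsqI]
    simp
  have hL : MemLp (fun ω => |T ω|) 2 ℙ := by
    rw [memLp_two_iff_integrable_sq hTm.abs.aestronglyMeasurable]
    simp_rw [sq_abs]
    by_contra hn
    rw [integral_undef hn] at hsqInt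
    exact zero_ne_one hsqInt
  refine ⟨hmean, ?_⟩
  rw [variance_eq_sub hL, hmean]
  simp only [Pi.pow_apply, sq_abs]
  rw [hsqInt, div_pow, mul_pow, mul_pow, mul_pow, mul_pow, Real.sq_sqrt hm0.le,
    Real.sq_sqrt Real.pi_pos.le]
  congr 2
  · ring
  · ring
end

section
/- Define v(m) = 1 - 4 m Γ(m/2)² / ((m-1)² π Γ((m-1)/2)²) for integers m ≥ 2. Then v is a strictly increasing function of m, i.e. v(m+1) > v(m) for all m ≥ 2. -/
/-- The variance of `|Δθ|` for the Adam update at time step `m` with i.i.d. standard normal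
gradients: `v m = 1 - 4 m Γ(m/2)² / ((m-1)² π Γ((m-1)/2)²)`. -/
noncomputable def absUpdateVariance (m : ℕ) : ℝ :=
  1 - 4 * m * Real.Gamma ((m : ℝ) / 2) ^ 2 /
    (((m : ℝ) - 1) ^ 2 * Real.pi * Real.Gamma (((m : ℝ) - 1) / 2) ^ 2)

noncomputable def auxA (x : ℝ) : ℝ :=
  (Real.Gamma (x + 1/2) / Real.Gamma x) ^ 4 * ((2 * x + 1) / (2 * x ^ 3))

lemma auxA_lt (x : ℝ) (hx : 0 < x) : auxA x < auxA (x + 1) := by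
  unfold auxA
  have e1 : x + 1 + 1/2 = (x + 1/2) + 1 := by ring
  rw [e1, Real.Gamma_add_one (by positivity), Real.Gamma_add_one hx.ne']
  have h1 : 0 < Real.Gamma x := Real.Gamma_pos_of_pos hx
  have h2 : 0 < Real.Gamma (x + 1/2) := Real.Gamma_pos_of_pos (by positivity)
  have e2 : (x + 1/2) * Real.Gamma (x + 1/2) / (x * Real.Gamma x)
      = (Real.Gamma (x + 1/2) / Real.Gamma x) * ((x + 1/2) / x) := by
    field_simp
  rw [e2, mul_pow, mul_assoc]
  apply mul_lt_mul_of_pos_left _ (by positivity)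
  rw [div_pow, div_mul_div_comm, div_lt_div_iff₀ (by positivity) (by positivity)]
  have key : (x + 1/2) ^ 4 * (2 * (x + 1) + 1) * (2 * x ^ 3)
      - (2 * x + 1) * (x ^ 4 * (2 * (x + 1) ^ 3))
      = x ^ 3 * (2 * x + 1) * ((x + 1/2) ^ 3 * (2 * x + 3) - 2 * x * (x + 1) ^ 3) := by ring
  have key2 : 0 < (x + 1/2) ^ 3 * (2 * x + 3) - 2 * x * (x + 1) ^ 3 := by
    ring_nf
    positivity
  have : 0 < x ^ 3 * (2 * x + 1) * ((x + 1/2) ^ 3 * (2 * x + 3) - 2 * x * (x + 1) ^ 3) :=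
    mul_pos (by positivity) key2
  linarith

lemma gamma_sq_le (x : ℝ) (hx : 0 < x) :
    Real.Gamma (x + 1/2) ^ 2 ≤ x * Real.Gamma x ^ 2 := by
  have h := Real.Gamma_mul_add_mul_le_rpow_Gamma_mul_rpow_Gamma (s := x) (t := x + 1)
    (a := 1/2) (b := 1/2) hx (by positivity) (by norm_num) (by norm_num) (by norm_num)
  have e : (1/2 : ℝ) * x + 1/2 * (x + 1) = x + 1/2 := by ring
  have h1 : 0 < Real.Gamma x := Real.Gamma_pos_of_pos hx
  have h2 : 0 < Real.Gamma (x + 1/2) := Real.Gamma_pos_of_pos (by positivity)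
  rw [e, Real.Gamma_add_one hx.ne', ← Real.sqrt_eq_rpow, ← Real.sqrt_eq_rpow,
    ← Real.sqrt_mul h1.le] at h
  have := (Real.le_sqrt' h2).1 h
  linarith

lemma auxA_le (x : ℝ) (hx : 0 < x) : auxA x ≤ 1 + 1 / (2 * x) := by
  unfold auxA
  have h1 : 0 < Real.Gamma x := Real.Gamma_pos_of_pos hx
  have h : (Real.Gamma (x + 1/2) / Real.Gamma x) ^ 2 ≤ x := by
    rw [div_pow, div_le_iff₀ (by positivity)]
    exact gamma_sq_le x hx
  have h4 : (Real.Gamma (x + 1/2) / Real.Gamma x) ^ 4 ≤ x ^ 2 := by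
    have := pow_le_pow_left₀ (by positivity) h 2
    rw [← pow_mul] at this
    exact this
  calc _ ≤ x ^ 2 * ((2 * x + 1) / (2 * x ^ 3)) := by gcongr
    _ = _ := by field_simp

lemma auxA_add (x : ℝ) (hx : 0 < x) (n : ℕ) : auxA x ≤ auxA (x + n) := by
  induction n with
  | zero => simp
  | succ k ih =>
    have := auxA_lt (x + k) (by positivity)
    push_cast
    rw [← add_assoc]
    linarith

lemma auxA_le_one (x : ℝ) (hx : 0 < x) : auxA x ≤ 1 := by
  by_contra! h
  obtain ⟨n, hn⟩ := exists_nat_gt (1 / (auxA x - 1))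
  have hd : 0 < auxA x - 1 := by linarith
  have h1 := auxA_add x hx n
  have h2 := auxA_le (x + n) (by positivity)
  rw [div_lt_iff₀ hd] at hn
  have h3 : auxA x - 1 ≤ 1 / (2 * (x + n)) := by linarith
  rw [le_div_iff₀ (by positivity)] at h3
  have : 0 < (auxA x - 1) * x := mul_pos hd hx
  nlinarith

lemma auxA_lt_one (x : ℝ) (hx : 0 < x) : auxA x < 1 :=
  (auxA_lt x hx).trans_le (auxA_le_one _ (by positivity))

/-- `v(m) = 1 - 4 m Γ(m/2)² / ((m-1)² π Γ((m-1)/2)²)` is strictly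
increasing in the integer `m ≥ 2`. -/
theorem absUpdateVariance_strictly_increasing (m : ℕ) (hm : 2 ≤ m) :
    absUpdateVariance (m + 1) > absUpdateVariance m := by
  have hm' : (2 : ℝ) ≤ m := by exact_mod_cast hm
  obtain ⟨x, hx⟩ : ∃ x : ℝ, (m : ℝ) = 2 * x := ⟨m / 2, by ring⟩
  have hx1 : 1 ≤ x := by linarith
  have hx0 : 0 < x := by linarith
  have hA := auxA_lt_one x hx0
  unfold absUpdateVariance
  unfold auxA at hA
  push_cast
  rw [hx]
  have e1 : 2 * x / 2 = x := by ring
  have e2 : (2 * x + 1) / 2 = x + 1/2 := by ring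
  have e3 : (2 * x + 1 - 1) / 2 = x := by ring
  have e4 : (2 * x - 1) / 2 = x - 1/2 := by ring
  have e5 : 2 * x + 1 - 1 = 2 * x := by ring
  rw [e3, e5, e1, e2, e4]
  have hg : Real.Gamma (x + 1/2) = (x - 1/2) * Real.Gamma (x - 1/2) := by
    rw [← Real.Gamma_add_one (by linarith)]
    congr 1; ring
  have h1 : 0 < Real.Gamma x := Real.Gamma_pos_of_pos hx0
  have h2 : 0 < Real.Gamma (x + 1/2) := Real.Gamma_pos_of_pos (by positivity)
  have e6 : (2 * x - 1) ^ 2 * Real.pi * Real.Gamma (x - 1/2) ^ 2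
      = 4 * Real.pi * Real.Gamma (x + 1/2) ^ 2 := by rw [hg]; ring
  rw [e6]
  generalize Real.Gamma (x + 1/2) = B at *
  generalize Real.Gamma x = A at *
  have hpi := Real.pi_pos
  rw [div_pow, div_mul_div_comm, div_lt_one (by positivity)] at hA
  apply sub_lt_sub_left
  rw [div_lt_div_iff₀ (by positivity) (by positivity)]
  have : 0 < 16 * x ^ 0 * Real.pi * (A ^ 4 * (2 * x ^ 3) - B ^ 4 * (2 * x + 1)) :=
    mul_pos (by positivity) (by linarith)
  nlinarith
end

section
/- For every integer m ≥ 5, the following strict inequality chain holds: m/(m-2) > 1 > 1 - 4 m Γ(m/2)² / ((m-1)² π Γ((m-1)/2)²). That is, the variance m/(m-2) of the Student-t distribution with m degrees of freedom (which models the Adam update when the correlation between numerator and denominator is ignored) strictly exceeds 1, the true variance of the update, which in turn strictly exceeds the variance of the magnitude of the update; moreover both outer quantities converge to 1 and to 1 - 2/π respectively as m → ∞, so the variance of the t-distribution decreases to 1 while the variance of the magnitude increases. -/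
/-- The variance `m/(m-2)` of the Student-t distribution with `m` degrees of freedom, which
models the Adam update when the correlation between numerator and denominator is ignored. -/
noncomputable def tVariance (m : ℕ) : ℝ := (m : ℝ) / ((m : ℝ) - 2)

noncomputable def gR (m : ℕ) : ℝ := Real.Gamma ((m : ℝ) / 2) / Real.Gamma (((m : ℝ) + 1) / 2)

lemma gR_pos (m : ℕ) (hm : 1 ≤ m) : 0 < gR m := by
  have h : (1 : ℝ) ≤ m := by exact_mod_cast hm
  exact div_pos (Real.Gamma_pos_of_pos (by linarith)) (Real.Gamma_pos_of_pos (by linarith))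

lemma gR_mul (m : ℕ) (hm : 1 ≤ m) : gR m * gR (m + 1) = 2 / m := by
  have h : (1 : ℝ) ≤ m := by exact_mod_cast hm
  have h1 := Real.Gamma_pos_of_pos (s := (m : ℝ) / 2) (by linarith)
  have h2 := Real.Gamma_pos_of_pos (s := ((m : ℝ) + 1) / 2) (by linarith)
  have h3 : Real.Gamma (((m : ℝ) + 1 + 1) / 2) = m / 2 * Real.Gamma ((m : ℝ) / 2) := by
    rw [← Real.Gamma_add_one (by positivity)]
    congr 1
    ring
  unfold gR
  push_cast
  rw [h3]
  field_simp

lemma gR_anti (m : ℕ) (hm : 1 ≤ m) : gR (m + 1) ≤ gR m := by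
  have h : (1 : ℝ) ≤ m := by exact_mod_cast hm
  have h1 := Real.Gamma_pos_of_pos (s := (m : ℝ) / 2) (by linarith)
  have h2 := Real.Gamma_pos_of_pos (s := ((m : ℝ) + 1) / 2) (by linarith)
  have h4 := Real.Gamma_pos_of_pos (s := ((m : ℝ) + 1 + 1) / 2) (by linarith)
  have key := Real.Gamma_mul_add_mul_le_rpow_Gamma_mul_rpow_Gamma (s := (m : ℝ) / 2)
    (t := ((m : ℝ) + 1 + 1) / 2) (a := 1 / 2) (b := 1 / 2) (by linarith) (by linarith)
    (by norm_num) (by norm_num) (by norm_num)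
  rw [← Real.sqrt_eq_rpow, ← Real.sqrt_eq_rpow, ← Real.sqrt_mul h1.le] at key
  have e : (1 / 2 : ℝ) * ((m : ℝ) / 2) + 1 / 2 * (((m : ℝ) + 1 + 1) / 2) = ((m : ℝ) + 1) / 2 := by
    ring
  rw [e, Real.le_sqrt h2.le (by positivity)] at key
  unfold gR
  push_cast
  rw [div_le_div_iff₀ h4 h2]
  nlinarith

lemma gR_two (m : ℕ) (hm : 1 ≤ m) : gR (m + 2) = gR m * (m / (m + 1)) := by
  have h : (1 : ℝ) ≤ m := by exact_mod_cast hm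
  have h1 := gR_mul m hm
  have h2 := gR_mul (m + 1) (by omega)
  have h3 := gR_pos (m + 1) (by omega)
  push_cast at h2
  apply mul_left_cancel₀ h3.ne'
  rw [show gR (m + 1) * (gR m * ((m : ℝ) / (m + 1))) = (gR m * gR (m + 1)) * (m / (m + 1)) by ring,
    h1, h2]
  field_simp

lemma gR_lim : Filter.Tendsto (fun m : ℕ => (m : ℝ) * gR m ^ 2) Filter.atTop (nhds 2) := by
  rw [← Filter.tendsto_add_atTop_iff_nat 1]
  have hu : Filter.Tendsto (fun m : ℕ => 2 + 2 * (1 / (m : ℝ))) Filter.atTop (nhds 2) := by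
    simpa using (tendsto_one_div_atTop_nhds_zero_nat (𝕜 := ℝ)).const_mul 2 |>.const_add 2
  refine tendsto_of_tendsto_of_tendsto_of_le_of_le' tendsto_const_nhds hu ?_ ?_
  · filter_upwards with m
    have h1 := gR_mul (m + 1) (by omega)
    have h2 := gR_anti (m + 1) (by omega)
    have h3 := gR_pos (m + 1) (by omega)
    have h4 : (0 : ℝ) < ((m + 1 : ℕ) : ℝ) := by positivity
    rw [eq_div_iff h4.ne'] at h1
    have : gR (m + 1) * gR (m + 1 + 1) ≤ gR (m + 1) ^ 2 := by nlinarith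
    nlinarith
  · filter_upwards [Filter.eventually_ge_atTop 1] with m hm
    have h1 := gR_mul m hm
    have h2 := gR_anti m hm
    have h3 := gR_pos (m + 1) (by omega)
    have h4 : (0 : ℝ) < m := by exact_mod_cast hm
    have h5 : gR (m + 1) ^ 2 ≤ 2 / m := by rw [← h1]; nlinarith
    calc ((m + 1 : ℕ) : ℝ) * gR (m + 1) ^ 2 ≤ ((m + 1 : ℕ) : ℝ) * (2 / m) := by gcongr
      _ = 2 + 2 * (1 / (m : ℝ)) := by push_cast; field_simp

noncomputable def gA (m : ℕ) : ℝ := ((m : ℝ) * gR m ^ 2) ^ 2 * (m / (m + 1))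

lemma gA_lim : Filter.Tendsto gA Filter.atTop (nhds 4) := by
  have := (gR_lim.pow 2).mul (tendsto_natCast_div_add_atTop (1 : ℝ))
  norm_num at this
  exact this

lemma gA_step (m : ℕ) (hm : 1 ≤ m) : gA (m + 2) < gA m := by
  have h : (1 : ℝ) ≤ m := by exact_mod_cast hm
  have h3 := gR_pos m hm
  unfold gA
  rw [gR_two m hm]
  push_cast
  have e1 : (((m : ℝ) + 2) * (gR m * (m / (m + 1))) ^ 2) ^ 2 * ((m + 2) / (m + 2 + 1)) =
    (gR m ^ 4 * m ^ 3 / (m + 1)) * ((m * (m + 2) ^ 3) / ((m + 1) ^ 3 * (m + 3))) := by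
    rw [show (m : ℝ) + 2 + 1 = m + 3 by ring]
    field_simp
  have e2 : ((m : ℝ) * gR m ^ 2) ^ 2 * (m / (m + 1)) = (gR m ^ 4 * m ^ 3 / (m + 1)) * 1 := by
    field_simp
  rw [e1, e2]
  apply mul_lt_mul_of_pos_left _ (by positivity)
  rw [div_lt_one (by positivity)]
  nlinarith

lemma gA_gt (m : ℕ) (hm : 1 ≤ m) : 4 < gA m := by
  have hanti : Antitone (fun k : ℕ => gA (m + 2 + 2 * k)) := by
    apply antitone_nat_of_succ_le
    intro k
    exact (gA_step (m + 2 + 2 * k) (by omega)).le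
  have hl : Filter.Tendsto (fun k : ℕ => gA (m + 2 + 2 * k)) Filter.atTop (nhds 4) := by
    apply gA_lim.comp
    apply Filter.tendsto_atTop_mono (f := fun k : ℕ => k) _ Filter.tendsto_id
    intro k
    show k ≤ m + 2 + 2 * k
    omega
  have h0 := hanti.le_of_tendsto hl 0
  have := gA_step m hm
  simp only [mul_zero, add_zero] at h0
  linarith

lemma absUV_eq (m : ℕ) (hm : 2 ≤ m) : absUpdateVariance m = 1 - (m * gR m ^ 2) / Real.pi := by
  have h : (2 : ℝ) ≤ m := by exact_mod_cast hm
  have hne : (m : ℝ) - 1 ≠ 0 := by linarith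
  have h1 := Real.Gamma_pos_of_pos (s := ((m : ℝ) - 1) / 2) (by linarith)
  have h3 : Real.Gamma (((m : ℝ) + 1) / 2) = (m - 1) / 2 * Real.Gamma (((m : ℝ) - 1) / 2) := by
    rw [← Real.Gamma_add_one (div_ne_zero hne two_ne_zero)]
    congr 1
    ring
  have hpi := Real.pi_pos
  unfold absUpdateVariance gR
  rw [h3]
  congr 1
  field_simp
  norm_num

/-- For every `m ≥ 5` the strict chain
`m/(m-2) > 1 > 1 - 4 m Γ(m/2)² / ((m-1)² π Γ((m-1)/2)²)` holds: the Student-t variance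
exceeds the true update variance `1`, which exceeds the variance of the update magnitude.
Moreover `m/(m-2) → 1` and the magnitude variance `→ 1 - 2/π` as `m → ∞`, the Student-t
variance strictly decreasing and the magnitude variance strictly increasing. -/
theorem tVariance_gt_one_gt_absUpdateVariance :
    (∀ m : ℕ, 5 ≤ m → tVariance m > 1 ∧ 1 > absUpdateVariance m) ∧
      Filter.Tendsto (fun m : ℕ => tVariance m) Filter.atTop (nhds 1) ∧
      Filter.Tendsto (fun m : ℕ => absUpdateVariance m) Filter.atTop
        (nhds (1 - 2 / Real.pi)) ∧
      (∀ m : ℕ, 5 ≤ m → tVariance (m + 1) < tVariance m) ∧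
      (∀ m : ℕ, 5 ≤ m → absUpdateVariance (m + 1) > absUpdateVariance m) := by
  refine ⟨?_, ?_, ?_, ?_, ?_⟩
  · intro m hm
    have h : (5 : ℝ) ≤ m := by exact_mod_cast hm
    constructor
    · unfold tVariance
      rw [gt_iff_lt, one_lt_div (by linarith)]
      linarith
    · rw [absUV_eq m (by omega)]
      have h3 := gR_pos m (by omega)
      have hpi := Real.pi_pos
      have : 0 < (m : ℝ) * gR m ^ 2 / Real.pi := by positivity
      linarith
  · have := tendsto_natCast_div_add_atTop (-2 : ℝ)
    simpa [tVariance, sub_eq_add_neg] using this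
  · refine ((gR_lim.div_const Real.pi).const_sub 1).congr' ?_
    filter_upwards [Filter.eventually_ge_atTop 2] with m hm
    rw [absUV_eq m hm]
  · intro m hm
    have h : (5 : ℝ) ≤ m := by exact_mod_cast hm
    unfold tVariance
    push_cast
    rw [div_lt_div_iff₀ (by linarith) (by linarith)]
    nlinarith
  · intro m hm
    have h : (5 : ℝ) ≤ m := by exact_mod_cast hm
    rw [absUV_eq m (by omega), absUV_eq (m + 1) (by omega)]
    have hR := gR_pos m (by omega)
    have hA := gA_gt m (by omega)
    have hM := gR_mul m (by omega)
    have e : gR (m + 1) = 2 / (m * gR m) := by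
      rw [← div_div, ← hM]
      field_simp
    have key : ((m + 1 : ℕ) : ℝ) * gR (m + 1) ^ 2 < m * gR m ^ 2 := by
      rw [e]
      push_cast
      unfold gA at hA
      have e2 : ((m : ℝ) + 1) * (2 / (m * gR m)) ^ 2 = 4 * ((m + 1) / (m ^ 2 * gR m ^ 2)) := by
        field_simp
        norm_num
      have e3 : (m : ℝ) * gR m ^ 2 =
          (((m : ℝ) * gR m ^ 2) ^ 2 * (m / (m + 1))) * ((m + 1) / (m ^ 2 * gR m ^ 2)) := by
        field_simp
      rw [e2, e3]
      exact mul_lt_mul_of_pos_right hA (by positivity)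
    have := div_lt_div_of_pos_right key Real.pi_pos
    linarith
end
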